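/- Let S be a CFCST system over Σ. Every proof in Km(S)L of a labelled sequent R, R_x wu ⊢ Γ can be transformed into a proof in Km(S)L of R, R_x̄ uw ⊢ Γ whose height is less than or equal to that of the given proof, and vice versa (where the height of a proof is the maximal number of sequents occurring on a branch from the end sequent to an initial sequent). In particular, the residuation rule inferring R, R_x̄ uw ⊢ Γ from R, R_x wu ⊢ Γ is height-preserving admissible in Km(S)L. -/

import Mathlib

/-!
Labelled sequent calculi for context-free grammar logics with converse.
-/

namespace GrammarLogic

/-- Modal formulae in negation normal form over the alphabet `α`:
literals `p`, `p̄`, and the connectives `∨`, `∧`, `⟨x⟩`, `[x]` (`x ∈ α`). -/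
inductive Fml (α : Type) : Type
  | pos : ℕ → Fml α
  | neg : ℕ → Fml α
  | or  : Fml α → Fml α → Fml α
  | and : Fml α → Fml α → Fml α
  | dia : α → Fml α → Fml α
  | box : α → Fml α → Fml α

/-- Multisets of relational atoms `R_x w u` (labels are natural numbers). -/
abbrev RAtms (α : Type) : Type := Multiset (α × ℕ × ℕ)

/-- Multisets of labelled formulae `w : φ`. -/
abbrev LFmls (α : Type) : Type := Multiset (ℕ × Fml α)

/-- The converse `s̄` of a string: reverse and apply the converse characterwise. -/
def strConv {α : Type} (bar : α → α) (s : List α) : List α := s.reverse.map bar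

/-- A context-free converse-closed string rewriting (CFCST) system over `α`
with converse operation `bar`: a finite set of production rules closed under
converses. -/
structure CFCST (α : Type) (bar : α → α) : Type where
  rules : Set (α × List α)
  finite : rules.Finite
  closed : ∀ x s, (x, s) ∈ rules ↔ (bar x, strConv bar s) ∈ rules

/-- One-step rewriting: replace an occurrence of the head of a production rule
by its body. -/
def OneStep {α : Type} (P : Set (α × List α)) (s t : List α) : Prop :=
  ∃ u v x r, (x, r) ∈ P ∧ s = u ++ x :: v ∧ t = u ++ r ++ v

/-- `Lang P x s` iff `x →*_S s`, i.e. `s ∈ L_S(x)`. -/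
def Lang {α : Type} (P : Set (α × List α)) (x : α) (s : List α) : Prop :=
  Relation.ReflTransGen (OneStep P) [x] s

/-- Edges of the propagation graph determined by the relational atoms `R`:
each `R_x w u` in `R` gives an edge `(w,u)` labelled `x` and an edge `(u,w)`
labelled `x̄`. -/
def Edge {α : Type} (bar : α → α) (R : RAtms α) (w u : ℕ) (c : α) : Prop :=
  (c, w, u) ∈ R ∨ (bar c, u, w) ∈ R

/-- `PPath bar R w u s`: there is a (possibly empty) propagation path from `w`
to `u` in the propagation graph determined by `R` whose string is `s`. -/
inductive PPath {α : Type} (bar : α → α) (R : RAtms α) : ℕ → ℕ → List α → Prop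
  | nil (w : ℕ) : PPath bar R w w []
  | cons {w u v : ℕ} {c : α} {s : List α} :
      Edge bar R w u c → PPath bar R u v s → PPath bar R w v (c :: s)

/-- Side condition of the propagation rule `(Pr_⟨x⟩)`: there is a propagation
path from `w` to `u` whose string belongs to `L_S(x)`. -/
def PropCond {α : Type} (bar : α → α) (P : Set (α × List α)) (R : RAtms α)
    (x : α) (w u : ℕ) : Prop :=
  ∃ s, PPath bar R w u s ∧ Lang P x s

/-- The label `v` occurs in the labelled sequent `R ⊢ Γ`. -/
def occursIn {α : Type} (v : ℕ) (R : RAtms α) (Γ : LFmls α) : Prop :=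
  (∃ x w u, (x, w, u) ∈ R ∧ (v = w ∨ v = u)) ∨ ∃ φ, (v, φ) ∈ Γ

/-- `ChainR s w u C`: the multiset `C` is a chain of relational atoms `R_s w u`
(for `s = ε` it is empty and `u = w`). -/
inductive ChainR {α : Type} : List α → ℕ → ℕ → RAtms α → Prop
  | nil (w : ℕ) : ChainR [] w w 0
  | cons {y : α} {s : List α} {w v u : ℕ} {C : RAtms α} :
      ChainR s v u C → ChainR (y :: s) w u ((y, w, v) ::ₘ C)

/-- The refined labelled calculus `Km(S)L` indexed by the height of derivations:
`KmLH bar P h R Γ` means that `R ⊢ Γ` has a `Km(S)L`-derivation of height `h`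
(the height of a proof being the maximal number of sequents occurring on a
branch from the end sequent to an initial sequent). -/
inductive KmLH {α : Type} (bar : α → α) (P : Set (α × List α)) :
    ℕ → RAtms α → LFmls α → Prop
  | id (R : RAtms α) (Γ : LFmls α) (w p : ℕ) :
      KmLH bar P 1 R ((w, Fml.pos p) ::ₘ (w, Fml.neg p) ::ₘ Γ)
  | orr {h : ℕ} {R : RAtms α} {Γ : LFmls α} {w : ℕ} {φ ψ : Fml α} :
      KmLH bar P h R ((w, φ) ::ₘ (w, ψ) ::ₘ Γ) →
      KmLH bar P (h + 1) R ((w, Fml.or φ ψ) ::ₘ Γ)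
  | andr {h₁ h₂ : ℕ} {R : RAtms α} {Γ : LFmls α} {w : ℕ} {φ ψ : Fml α} :
      KmLH bar P h₁ R ((w, φ) ::ₘ Γ) → KmLH bar P h₂ R ((w, ψ) ::ₘ Γ) →
      KmLH bar P (max h₁ h₂ + 1) R ((w, Fml.and φ ψ) ::ₘ Γ)
  | boxr {h : ℕ} {R : RAtms α} {Γ : LFmls α} {w u : ℕ} {x : α} {φ : Fml α} :
      ¬ occursIn u R ((w, Fml.box x φ) ::ₘ Γ) →
      KmLH bar P h ((x, w, u) ::ₘ R) ((u, φ) ::ₘ Γ) →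
      KmLH bar P (h + 1) R ((w, Fml.box x φ) ::ₘ Γ)
  | pr {h : ℕ} {R : RAtms α} {Γ : LFmls α} {w u : ℕ} {x : α} {φ : Fml α} :
      PropCond bar P R x w u →
      KmLH bar P h R ((w, Fml.dia x φ) ::ₘ (u, φ) ::ₘ Γ) →
      KmLH bar P (h + 1) R ((w, Fml.dia x φ) ::ₘ Γ)

/-!
The relational atoms of a sequent enter a derivation only through the freshness condition of `boxr`
and the propagation paths of `pr`. Both are determined by the propagation graph `Edge bar R`, to
which `R_x w u` and `R_x̄ u w` contribute the same two edges, so replacing one atom by the other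
throughout a derivation leaves every rule application intact.
-/

section PropagationGraph

variable {α : Type} {bar : α → α} {P : Set (α × List α)} {R R' : RAtms α} {Γ : LFmls α}

theorem edge_cons (a : α × ℕ × ℕ) (R : RAtms α) :
    Edge bar (a ::ₘ R) = Edge bar {a} ⊔ Edge bar R := by
  ext w u c
  simp only [Edge, Multiset.mem_cons, Multiset.mem_singleton, Pi.sup_apply, sup_Prop_eq]
  exact or_or_or_comm

theorem edge_singleton_residuation (hbar : Function.Involutive bar) (x : α) (w u : ℕ) :
    Edge bar {(x, w, u)} = Edge bar {(bar x, u, w)} := by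
  ext a b c
  have bar_eq_iff : bar c = x ↔ c = bar x := hbar.eq_iff
  have bar_eq_bar_iff : bar c = bar x ↔ c = x := hbar.injective.eq_iff
  simp only [Edge, Multiset.mem_singleton, Prod.mk.injEq, bar_eq_iff, bar_eq_bar_iff]
  tauto

theorem edge_cons_residuation (hbar : Function.Involutive bar) (R : RAtms α) (x : α) (w u : ℕ) :
    Edge bar ((x, w, u) ::ₘ R) = Edge bar ((bar x, u, w) ::ₘ R) := by
  rw [edge_cons, edge_singleton_residuation hbar, ← edge_cons]

theorem PPath.mono (hE : Edge bar R ≤ Edge bar R') {w u : ℕ} {s : List α}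
    (path : PPath bar R w u s) : PPath bar R' w u s := by
  induction path with
  | nil w => exact .nil w
  | cons edge _ ih => exact .cons (hE _ _ _ edge) ih

theorem PropCond.mono (hE : Edge bar R ≤ Edge bar R') {x : α} {w u : ℕ}
    (hprop : PropCond bar P R x w u) : PropCond bar P R' x w u :=
  let ⟨s, path, hs⟩ := hprop
  ⟨s, path.mono hE, hs⟩

theorem occursIn_iff_edge (bar : α → α) {v : ℕ} :
    occursIn v R Γ ↔
      (∃ x w u, Edge bar R w u x ∧ (v = w ∨ v = u)) ∨ ∃ φ, (v, φ) ∈ Γ := by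
  refine or_congr_left ⟨?_, ?_⟩
  · rintro ⟨x, w, u, atom, hv⟩
    exact ⟨x, w, u, .inl atom, hv⟩
  · rintro ⟨x, w, u, atom | converse_atom, hv⟩
    · exact ⟨x, w, u, atom, hv⟩
    · exact ⟨bar x, u, w, converse_atom, hv.symm⟩

theorem occursIn_congr (hE : Edge bar R = Edge bar R') {v : ℕ} :
    occursIn v R Γ ↔ occursIn v R' Γ := by
  rw [occursIn_iff_edge bar, hE, ← occursIn_iff_edge bar]

theorem KmLH.of_edge_eq {h : ℕ} (d : KmLH bar P h R Γ) (hE : Edge bar R = Edge bar R') :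
    KmLH bar P h R' Γ := by
  induction d generalizing R' with
  | id R Γ w p => exact .id R' Γ w p
  | orr _ ih => exact .orr (ih hE)
  | andr _ _ ih₁ ih₂ => exact .andr (ih₁ hE) (ih₂ hE)
  | boxr fresh _ ih =>
    refine .boxr (mt (occursIn_congr hE).2 fresh) (ih ?_)
    rw [edge_cons, hE, ← edge_cons]
  | pr hprop _ ih => exact .pr (hprop.mono hE.le) (ih hE)

end PropagationGraph

theorem residuation_hp_admissible_general {α : Type} {bar : α → α}
    (hbar : Function.Involutive bar) (P : Set (α × List α))
    (h : ℕ) (R : RAtms α) (Γ : LFmls α) (x : α) (w u : ℕ) :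
    KmLH bar P h ((x, w, u) ::ₘ R) Γ ↔ KmLH bar P h ((bar x, u, w) ::ₘ R) Γ :=
  have same_graph := edge_cons_residuation hbar R x w u
  ⟨fun d => d.of_edge_eq same_graph, fun d => d.of_edge_eq same_graph.symm⟩

/-- Let `S` be a CFCST system over `Σ`.  Every proof in
`Km(S)L` of `R, R_x wu ⊢ Γ` can be transformed into a proof in `Km(S)L` of
`R, R_x̄ uw ⊢ Γ` of smaller or equal height, and vice versa.  In particular the
residuation rule, inferring `R, R_x̄ uw ⊢ Γ` from `R, R_x wu ⊢ Γ`, is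
height-preserving admissible in `Km(S)L`. -/
theorem residuation_hp_admissible {α : Type} (bar : α → α)
    (hbar : Function.Involutive bar) (S : CFCST α bar)
    (h : ℕ) (R : RAtms α) (Γ : LFmls α) (x : α) (w u : ℕ) :
    (KmLH bar S.rules h ((x, w, u) ::ₘ R) Γ →
      ∃ h' ≤ h, KmLH bar S.rules h' ((bar x, u, w) ::ₘ R) Γ) ∧
    (KmLH bar S.rules h ((bar x, u, w) ::ₘ R) Γ →
      ∃ h' ≤ h, KmLH bar S.rules h' ((x, w, u) ::ₘ R) Γ) := by
  have residuation := residuation_hp_admissible_general hbar S.rules h R Γ x w u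
  exact ⟨fun d => ⟨h, le_rfl, residuation.1 d⟩, fun d => ⟨h, le_rfl, residuation.2 d⟩⟩

end GrammarLogic
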